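/- arXiv:2208.04442 — 6 statements merged into one kernel-verified Lean document; each statement's English description precedes it below -/
import Mathlib

section
/- Differential form of Theorem 2.2 (nonlocal constants): let L be a Lagrangian density on D-dimensional spacetime, let φ be a smooth solution of the Euler–Lagrange equation for L, and let Φ be a perturbed field associated with φ. Then for every spacetime point x, the derivative at ε = 0 of the map ε ↦ L(x, Φ(ε,x), ∇Φ_ε x) equals the spacetime divergence Σ_μ ∂_μ ( fun y ↦ L_{p_μ}(jφ y) · δΦ y ) x. (This pointwise identity is exactly what makes the paper's surface-minus-volume 'nonlocal constant' constant, by the divergence theorem.) -/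
open scoped BigOperators

noncomputable section

/-- Spacetime partial derivative `∂_μ F x`. -/
def pd {D : ℕ} (F : (Fin D → ℝ) → ℝ) (μ : Fin D) (x : Fin D → ℝ) : ℝ :=
  fderiv ℝ F x (Pi.single μ 1)

/-- Gradient (jet of first derivatives) of a field. -/
def grad {D : ℕ} (φ : (Fin D → ℝ) → ℝ) (x : Fin D → ℝ) : Fin D → ℝ :=
  fun ν => pd φ ν x

/-- Partial derivative of the Lagrangian density in its field argument `u`. -/
def Lu {D : ℕ} (L : (Fin D → ℝ) → ℝ → (Fin D → ℝ) → ℝ)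
    (x : Fin D → ℝ) (u : ℝ) (p : Fin D → ℝ) : ℝ :=
  deriv (fun v => L x v p) u

/-- Partial derivative of the Lagrangian density in the μ-th component of `p`. -/
def Lp {D : ℕ} (L : (Fin D → ℝ) → ℝ → (Fin D → ℝ) → ℝ) (μ : Fin D)
    (x : Fin D → ℝ) (u : ℝ) (p : Fin D → ℝ) : ℝ :=
  fderiv ℝ (fun q => L x u q) p (Pi.single μ 1)

theorem aux_Lu {D : ℕ} (L : (Fin D → ℝ) → ℝ → (Fin D → ℝ) → ℝ)
    (hL : ContDiff ℝ (⊤ : ℕ∞) (fun q : (Fin D → ℝ) × ℝ × (Fin D → ℝ) => L q.1 q.2.1 q.2.2))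
    (x : Fin D → ℝ) (u : ℝ) (p : Fin D → ℝ) :
    Lu L x u p = fderiv ℝ (fun q : (Fin D → ℝ) × ℝ × (Fin D → ℝ) => L q.1 q.2.1 q.2.2)
      (x, u, p) (0, 1, 0) := by
  have h1 := (hL.differentiable (by simp) (x, u, p)).hasFDerivAt
  have h2 : HasDerivAt (fun v : ℝ => ((x, v, p) : (Fin D → ℝ) × ℝ × (Fin D → ℝ))) (0, 1, 0) u :=
    (hasDerivAt_const u x).prodMk ((hasDerivAt_id u).prodMk (hasDerivAt_const u p))
  exact (h1.comp_hasDerivAt u h2).deriv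

theorem aux_Lp {D : ℕ} (L : (Fin D → ℝ) → ℝ → (Fin D → ℝ) → ℝ)
    (hL : ContDiff ℝ (⊤ : ℕ∞) (fun q : (Fin D → ℝ) × ℝ × (Fin D → ℝ) => L q.1 q.2.1 q.2.2))
    (μ : Fin D) (x : Fin D → ℝ) (u : ℝ) (p : Fin D → ℝ) :
    Lp L μ x u p = fderiv ℝ (fun q : (Fin D → ℝ) × ℝ × (Fin D → ℝ) => L q.1 q.2.1 q.2.2)
      (x, u, p) (0, 0, Pi.single μ 1) := by
  have h1 := (hL.differentiable (by simp) (x, u, p)).hasFDerivAt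
  have h2 : HasFDerivAt (fun q : Fin D → ℝ => ((x, u, q) : (Fin D → ℝ) × ℝ × (Fin D → ℝ)))
      ((0 : (Fin D → ℝ) →L[ℝ] (Fin D → ℝ)).prod
        ((0 : (Fin D → ℝ) →L[ℝ] ℝ).prod (ContinuousLinearMap.id ℝ (Fin D → ℝ)))) p :=
    (hasFDerivAt_const x p).prodMk ((hasFDerivAt_const u p).prodMk (hasFDerivAt_id p))
  have h3 := (h1.comp p h2).fderiv
  unfold Lp
  refine (congrArg (fun T => T (Pi.single μ 1)) h3).trans ?_
  simp

theorem aux_pd {D : ℕ} (Φ : ℝ × (Fin D → ℝ) → ℝ) (hΦ : ContDiff ℝ (⊤ : ℕ∞) Φ) (ε : ℝ)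
    (ν : Fin D) (x : Fin D → ℝ) :
    pd (fun y => Φ (ε, y)) ν x = fderiv ℝ Φ (ε, x) (0, Pi.single ν 1) := by
  have h1 := (hΦ.differentiable (by simp) (ε, x)).hasFDerivAt
  have h2 : HasFDerivAt (fun q : Fin D → ℝ => ((ε, q) : ℝ × (Fin D → ℝ)))
      ((0 : (Fin D → ℝ) →L[ℝ] ℝ).prod (ContinuousLinearMap.id ℝ (Fin D → ℝ))) x :=
    (hasFDerivAt_const ε x).prodMk (hasFDerivAt_id x)
  have h3 := (h1.comp x h2).fderiv
  unfold pd
  refine (congrArg (fun T => T (Pi.single ν 1)) h3).trans ?_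
  simp

theorem aux_de {D : ℕ} (Φ : ℝ × (Fin D → ℝ) → ℝ) (hΦ : ContDiff ℝ (⊤ : ℕ∞) Φ) (ε : ℝ)
    (x : Fin D → ℝ) :
    HasDerivAt (fun ε => Φ (ε, x)) (fderiv ℝ Φ (ε, x) (1, 0)) ε := by
  have h1 := (hΦ.differentiable (by simp) (ε, x)).hasFDerivAt
  have h2 : HasDerivAt (fun v : ℝ => ((v, x) : ℝ × (Fin D → ℝ))) (1, 0) ε :=
    (hasDerivAt_id ε).prodMk (hasDerivAt_const ε x)
  exact h1.comp_hasDerivAt ε h2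

/-- Differential form of Theorem 2.2 (nonlocal constants). -/
theorem nonlocal_constant_differential_form {D : ℕ} (hD : 1 ≤ D)
    (L : (Fin D → ℝ) → ℝ → (Fin D → ℝ) → ℝ)
    (hL : ContDiff ℝ (⊤ : ℕ∞) (fun q : (Fin D → ℝ) × ℝ × (Fin D → ℝ) => L q.1 q.2.1 q.2.2))
    (φ : (Fin D → ℝ) → ℝ) (hφ : ContDiff ℝ (⊤ : ℕ∞) φ)
    (hEL : ∀ x, Lu L x (φ x) (grad φ x) =
      ∑ μ, pd (fun y => Lp L μ y (φ y) (grad φ y)) μ x)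
    (Φ : ℝ × (Fin D → ℝ) → ℝ) (hΦ : ContDiff ℝ (⊤ : ℕ∞) Φ)
    (hΦ0 : ∀ x, Φ (0, x) = φ x) :
    ∀ x, deriv (fun ε => L x (Φ (ε, x)) (fun ν => pd (fun y => Φ (ε, y)) ν x)) 0 =
      ∑ μ, pd (fun y => Lp L μ y (φ y) (grad φ y) * deriv (fun ε => Φ (ε, y)) 0) μ x := by
  intro x
  have hφe : φ = fun y => Φ (0, y) := funext fun y => (hΦ0 y).symm
  set LL := fun q : (Fin D → ℝ) × ℝ × (Fin D → ℝ) => L q.1 q.2.1 q.2.2 with hLL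
  have hgrad : ∀ y, grad φ y = fun ν => fderiv ℝ Φ (0, y) (0, Pi.single ν 1) := by
    intro y
    funext ν
    rw [hφe]
    exact aux_pd Φ hΦ 0 ν y
  have hdΦ : ContDiff ℝ (⊤ : ℕ∞) (fderiv ℝ Φ) := hΦ.fderiv_right (by simp)
  have hdL : ContDiff ℝ (⊤ : ℕ∞) (fderiv ℝ LL) := hL.fderiv_right (by simp)
  -- smooth in each direction
  have hdir : ∀ v, ContDiff ℝ (⊤ : ℕ∞) (fun z => fderiv ℝ Φ z v) :=
    fun v => hdΦ.clm_apply contDiff_const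
  have hdd : ∀ z v w, fderiv ℝ (fun z => fderiv ℝ Φ z v) z w
      = fderiv ℝ (fderiv ℝ Φ) z w v := by
    intro z v w
    have h := ((hdΦ.differentiable (by simp) z).hasFDerivAt.clm_apply
      (hasFDerivAt_const v z)).fderiv
    rw [h]
    simp
  have hsymm : ∀ z v w, fderiv ℝ (fderiv ℝ Φ) z v w = fderiv ℝ (fderiv ℝ Φ) z w v := by
    intro z v w
    exact (hΦ.contDiffAt.isSymmSndFDerivAt (by
      simp only [minSmoothness_of_isRCLikeNormedField]
      exact WithTop.coe_le_coe.2 (le_top : (2 : ℕ∞) ≤ ⊤))) v w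
  -- left-hand side
  have hleft : HasDerivAt (fun ε => L x (Φ (ε, x)) (fun ν => pd (fun y => Φ (ε, y)) ν x))
      (fderiv ℝ LL (x, φ x, grad φ x) (0, fderiv ℝ Φ (0, x) (1, 0),
        fun ν => fderiv ℝ (fderiv ℝ Φ) (0, x) (1, 0) (0, Pi.single ν 1))) 0 := by
    have h2 : HasDerivAt (fun ε : ℝ => ((x, Φ (ε, x), fun ν => pd (fun y => Φ (ε, y)) ν x) :
        (Fin D → ℝ) × ℝ × (Fin D → ℝ))) (0, fderiv ℝ Φ (0, x) (1, 0),
        fun ν => fderiv ℝ (fderiv ℝ Φ) (0, x) (1, 0) (0, Pi.single ν 1)) 0 := by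
      refine (hasDerivAt_const _ x).prodMk ((aux_de Φ hΦ 0 x).prodMk (hasDerivAt_pi.2 fun ν => ?_))
      simp only [aux_pd Φ hΦ]
      rw [← hdd]
      exact aux_de _ (hdir _) 0 x
    have hpt : ((x, Φ (0, x), fun ν => pd (fun y => Φ (0, y)) ν x) :
        (Fin D → ℝ) × ℝ × (Fin D → ℝ)) = (x, φ x, grad φ x) := by
      rw [hφe]; rfl
    have h1 := (hL.differentiable (by simp) (x, φ x, grad φ x)).hasFDerivAt
    rw [← hpt] at h1 ⊢
    exact h1.comp_hasDerivAt 0 h2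
  rw [hleft.deriv]
  -- right-hand side
  have hΦpar : ContDiff ℝ (⊤ : ℕ∞) (fun y : Fin D → ℝ => ((0 : ℝ), y)) :=
    contDiff_const.prodMk contDiff_id
  have hgs : ContDiff ℝ (⊤ : ℕ∞) (grad φ) := by
    have : grad φ = fun y => fun ν => fderiv ℝ Φ (0, y) (0, Pi.single ν 1) := funext hgrad
    rw [this]
    exact contDiff_pi.2 fun ν => (hdir _).comp hΦpar
  have hLps : ∀ μ, ContDiff ℝ (⊤ : ℕ∞) (fun y => Lp L μ y (φ y) (grad φ y)) := by
    intro μ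
    simp only [aux_Lp L hL]
    exact (hdL.comp (contDiff_id.prodMk (hφ.prodMk hgs))).clm_apply contDiff_const
  have hδ : ContDiff ℝ (⊤ : ℕ∞) (fun y => fderiv ℝ Φ (0, y) (1, 0)) := (hdir _).comp hΦpar
  have hterm : ∀ μ, pd (fun y => Lp L μ y (φ y) (grad φ y) * deriv (fun ε => Φ (ε, y)) 0) μ x
      = pd (fun y => Lp L μ y (φ y) (grad φ y)) μ x * fderiv ℝ Φ (0, x) (1, 0)
        + fderiv ℝ (fderiv ℝ Φ) (0, x) (1, 0) (0, Pi.single μ 1)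
          * Lp L μ x (φ x) (grad φ x) := by
    intro μ
    have e : (fun y => Lp L μ y (φ y) (grad φ y) * deriv (fun ε => Φ (ε, y)) 0)
        = fun y => Lp L μ y (φ y) (grad φ y) * fderiv ℝ Φ (0, y) (1, 0) :=
      funext fun y => by rw [(aux_de Φ hΦ 0 y).deriv]
    have hp := aux_pd _ (hdir (1, 0)) 0 μ x
    rw [hdd, hsymm] at hp
    rw [e, ← hp]
    have h := (((hLps μ).differentiable (by simp) x).hasFDerivAt.mul
      (hδ.differentiable (by simp) x).hasFDerivAt).fderiv
    unfold pd
    refine (congrArg (fun T => T (Pi.single μ 1)) h).trans ?_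
    simp only [add_apply, smul_apply, smul_eq_mul]
    ring
  rw [Finset.sum_congr rfl fun μ _ => hterm μ, Finset.sum_add_distrib, ← Finset.sum_mul, ← hEL x,
    aux_Lu L hL]
  simp only [aux_Lp L hL]
  generalize (fderiv ℝ Φ (0, x)) (1, 0) = a
  generalize hb : (fun ν => fderiv ℝ (fderiv ℝ Φ) (0, x) (1, 0) (0, Pi.single ν 1)) = b
  have hb' : ∀ ν, fderiv ℝ (fderiv ℝ Φ) (0, x) (1, 0) (0, Pi.single ν 1) = b ν :=
    fun ν => congrFun hb ν
  simp only [hb']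
  have hv : ((0, a, b) : (Fin D → ℝ) × ℝ × (Fin D → ℝ))
      = a • (0, 1, 0) + ∑ μ, b μ • ((0, 0, Pi.single μ 1) : (Fin D → ℝ) × ℝ × (Fin D → ℝ)) := by
    refine Prod.ext ?_ (Prod.ext ?_ ?_)
    · simp [Prod.fst_sum]
    · simp [Prod.fst_sum, Prod.snd_sum]
    · funext ν
      simp [Prod.snd_sum, Finset.sum_apply, Pi.single_apply]
  rw [hv, map_add, map_smul, map_sum]
  simp only [map_smul, smul_eq_mul]
  rw [mul_comm a]

end
end

section
/- Theorem 3.2 (total divergence condition yields conserved currents): let L be a Lagrangian density, φ a smooth solution of the Euler–Lagrange equation for L, and Φ a perturbed field associated with φ. Suppose there are smooth maps ψ^μ : (Fin D → ℝ) → ℝ (μ : Fin D) such that for all x the derivative at ε = 0 of ε ↦ L(x, Φ(ε,x), ∇Φ_ε x) equals Σ_μ ∂_μ ψ^μ x (the total divergence condition). Then the current j^μ x := L_{p_μ}(jφ x) · δΦ x − ψ^μ x is conserved: Σ_μ ∂_μ j^μ x = 0 for all x. -/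
open scoped BigOperators

noncomputable section

theorem aux_line {D : ℕ} (x : Fin D → ℝ) :
    HasDerivAt (fun ε : ℝ => (ε, x)) ((1 : ℝ), (0 : Fin D → ℝ)) 0 :=
  (hasDerivAt_id (0:ℝ)).prodMk (hasDerivAt_const (0:ℝ) x)

theorem aux_dl {D : ℕ} (Φ : ℝ × (Fin D → ℝ) → ℝ) (hΦ : ContDiff ℝ (⊤ : ℕ∞) Φ)
    (x : Fin D → ℝ) :
    HasDerivAt (fun ε => Φ (ε, x)) (fderiv ℝ Φ (0, x) (1, 0)) 0 :=
  HasFDerivAt.comp_hasDerivAt (0:ℝ) ((hΦ.differentiable (by simp)) (0, x)).hasFDerivAt (aux_line x)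

set_option maxHeartbeats 2000000 in
theorem aux_mix {D : ℕ} (Φ : ℝ × (Fin D → ℝ) → ℝ) (hΦ : ContDiff ℝ (⊤ : ℕ∞) Φ)
    (x : Fin D → ℝ) : ∀ ν, HasDerivAt (fun ε => pd (fun y => Φ (ε, y)) ν x)
      (pd (fun y => deriv (fun ε => Φ (ε, y)) 0) ν x) 0 := by
  have hdΦ : ContDiff ℝ (⊤ : ℕ∞) (fderiv ℝ Φ) := hΦ.fderiv_right (by simp)
  have hδeq : (fun y => deriv (fun ε => Φ (ε, y)) 0) = fun y => fderiv ℝ Φ (0, y) (1, 0) :=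
    funext fun y => (aux_dl Φ hΦ y).deriv
  have h2 := (hdΦ.differentiable (by simp) (0, x)).hasFDerivAt
  have hsym : IsSymmSndFDerivAt ℝ Φ (0, x) :=
    hΦ.contDiffAt.isSymmSndFDerivAt (by
      rw [minSmoothness_of_isRCLikeNormedField]
      exact WithTop.coe_le_coe.2 (le_top : (2 : ℕ∞) ≤ ⊤))
  intro ν
  have e1 : pd (fun y => deriv (fun ε => Φ (ε, y)) 0) ν x
      = fderiv ℝ (fderiv ℝ Φ) (0, x) (0, Pi.single ν 1) (1, 0) := by
    rw [hδeq]
    have := ((HasFDerivAt.comp x h2 (hasFDerivAt_prodMk_right (0:ℝ) x)).clm_apply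
      (hasFDerivAt_const ((1:ℝ), (0 : Fin D → ℝ)) x)).fderiv
    have h4 := congrArg (fun T => T (Pi.single ν (1:ℝ))) this
    simpa [pd, Function.comp_def] using h4
  rw [e1, hsym.eq (0, Pi.single ν 1) (1, 0)]
  simp only [aux_pd Φ hΦ]
  have := (HasFDerivAt.comp_hasDerivAt (0:ℝ) h2 (aux_line x)).clm_apply
    (hasDerivAt_const (0:ℝ) ((0:ℝ), (Pi.single ν 1 : Fin D → ℝ)))
  simpa [Function.comp_def] using this

/-- Theorem 3.2: the total divergence condition yields conserved currents. -/
theorem total_divergence_condition_yields_conserved_current {D : ℕ} (hD : 1 ≤ D)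
    (L : (Fin D → ℝ) → ℝ → (Fin D → ℝ) → ℝ)
    (hL : ContDiff ℝ (⊤ : ℕ∞) (fun q : (Fin D → ℝ) × ℝ × (Fin D → ℝ) => L q.1 q.2.1 q.2.2))
    (φ : (Fin D → ℝ) → ℝ) (hφ : ContDiff ℝ (⊤ : ℕ∞) φ)
    (hEL : ∀ x, Lu L x (φ x) (grad φ x) =
      ∑ μ, pd (fun y => Lp L μ y (φ y) (grad φ y)) μ x)
    (Φ : ℝ × (Fin D → ℝ) → ℝ) (hΦ : ContDiff ℝ (⊤ : ℕ∞) Φ)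
    (hΦ0 : ∀ x, Φ (0, x) = φ x)
    (ψ : Fin D → (Fin D → ℝ) → ℝ) (hψ : ∀ μ, ContDiff ℝ (⊤ : ℕ∞) (ψ μ))
    (hTD : ∀ x, deriv (fun ε => L x (Φ (ε, x)) (fun ν => pd (fun y => Φ (ε, y)) ν x)) 0 =
      ∑ μ, pd (ψ μ) μ x) :
    ∀ x, ∑ μ, pd (fun y =>
        Lp L μ y (φ y) (grad φ y) * deriv (fun ε => Φ (ε, y)) 0 - ψ μ y) μ x = 0 := by
  intro x
  set G := (fun q : (Fin D → ℝ) × ℝ × (Fin D → ℝ) => L q.1 q.2.1 q.2.2) with hG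
  have hdΦ : ContDiff ℝ (⊤ : ℕ∞) (fderiv ℝ Φ) := hΦ.fderiv_right (by simp)
  have hdG : ContDiff ℝ (⊤ : ℕ∞) (fderiv ℝ G) := hL.fderiv_right (by simp)
  have hdφ : ContDiff ℝ (⊤ : ℕ∞) (fderiv ℝ φ) := hφ.fderiv_right (by simp)
  have hgrad : ContDiff ℝ (⊤ : ℕ∞) (grad φ) := by
    rw [contDiff_pi]
    intro ν
    exact hdφ.clm_apply contDiff_const
  have hj : ContDiff ℝ (⊤ : ℕ∞) (fun y => (y, φ y, grad φ y)) :=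
    contDiff_id.prodMk (hφ.prodMk hgrad)
  have hP : ∀ μ, ContDiff ℝ (⊤ : ℕ∞) (fun y => Lp L μ y (φ y) (grad φ y)) := by
    intro μ
    simp only [aux_Lp L hL]
    exact (hdG.comp hj).clm_apply contDiff_const
  have hδeq : (fun y => deriv (fun ε => Φ (ε, y)) 0) = fun y => fderiv ℝ Φ (0, y) (1, 0) :=
    funext fun y => (aux_dl Φ hΦ y).deriv
  have hδ : ContDiff ℝ (⊤ : ℕ∞) (fun y => deriv (fun ε => Φ (ε, y)) 0) := by
    rw [hδeq]
    exact (hdΦ.comp (contDiff_const.prodMk contDiff_id)).clm_apply contDiff_const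
  have h0 : (fun y => Φ (0, y)) = φ := funext hΦ0
  have hmix := aux_mix Φ hΦ x
  have hchain := hTD x
  have hc : HasDerivAt (fun ε => (x, Φ (ε, x), fun ν => pd (fun y => Φ (ε, y)) ν x))
      ((0 : Fin D → ℝ), deriv (fun ε => Φ (ε, x)) 0,
        fun ν => pd (fun y => deriv (fun ε => Φ (ε, y)) 0) ν x) 0 :=
    (hasDerivAt_const (0:ℝ) x).prodMk
      ((aux_dl Φ hΦ x).differentiableAt.hasDerivAt.prodMk (hasDerivAt_pi.2 hmix))
  have hpt : (x, Φ (0, x), fun ν => pd (fun y => Φ (0, y)) ν x) = (x, φ x, grad φ x) := by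
    rw [h0, hΦ0]; rfl
  have hGd := (hL.differentiable (by simp) (x, Φ (0, x), fun ν => pd (fun y => Φ (0, y)) ν x)).hasFDerivAt
  have hd := (HasFDerivAt.comp_hasDerivAt (0:ℝ) hGd hc).deriv
  rw [hpt] at hd
  have hvec : ((0 : Fin D → ℝ), deriv (fun ε => Φ (ε, x)) 0,
        fun ν => pd (fun y => deriv (fun ε => Φ (ε, y)) 0) ν x)
      = (deriv (fun ε => Φ (ε, x)) 0) • ((0 : Fin D → ℝ), (1:ℝ), (0 : Fin D → ℝ))
        + ∑ ν, (pd (fun y => deriv (fun ε => Φ (ε, y)) 0) ν x) •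
          ((0 : Fin D → ℝ), (0:ℝ), (Pi.single ν 1 : Fin D → ℝ)) := by
    refine Prod.ext ?_ (Prod.ext ?_ ?_)
    · simp [Prod.fst_sum]
    · simp [Prod.fst_sum, Prod.snd_sum]
    · ext i
      simp [Prod.snd_sum, Finset.sum_apply, Pi.single_apply]
  rw [hvec, map_add, map_smul, map_sum] at hd
  simp only [map_smul, smul_eq_mul] at hd
  rw [← aux_Lu L hL] at hd
  simp only [hG, ← aux_Lp L hL] at hd
  have hd' := hd.symm.trans hchain
  rw [hEL x] at hd'
  have hprod : ∀ μ, pd (fun y =>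
        Lp L μ y (φ y) (grad φ y) * deriv (fun ε => Φ (ε, y)) 0 - ψ μ y) μ x
      = deriv (fun ε => Φ (ε, x)) 0 * pd (fun y => Lp L μ y (φ y) (grad φ y)) μ x
        + pd (fun y => deriv (fun ε => Φ (ε, y)) 0) μ x * Lp L μ x (φ x) (grad φ x)
        - pd (ψ μ) μ x := by
    intro μ
    have := ((((hP μ).differentiable (by simp) x).hasFDerivAt.mul
      (hδ.differentiable (by simp) x).hasFDerivAt).sub
      ((hψ μ).differentiable (by simp) x).hasFDerivAt).fderiv
    have h4 := congrArg (fun T => T (Pi.single μ (1:ℝ))) this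
    refine h4.trans ?_
    simp [pd]
    ring
  simp only [hprod, Finset.sum_sub_distrib, Finset.sum_add_distrib, ← Finset.mul_sum]
  linarith

end
end

section
/- Symmetry of the Energy–Momentum tensor (claim after Theorem 3.3): suppose the spacetime-independent Lagrangian density has the form L₀(u, p) = F(u, Σ_{α,β} η α β · p_α · p_β) for a smooth F : ℝ → ℝ → ℝ. Then for every smooth field φ and every spacetime point x, the contravariant Energy–Momentum tensor T^{μν} x := Σ_σ η ν σ · T^μ_σ x, where T^μ_ν x := L₀_{p_μ}(φ x, ∇φ x)·∂_ν φ x − (if μ = ν then L₀(φ x, ∇φ x) else 0), is symmetric: T^{μν} x = T^{νμ} x for all μ, ν. -/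
open scoped BigOperators

noncomputable section

/-- Minkowski metric on `Fin D`. -/
def eta (D : ℕ) (μ ν : Fin D) : ℝ :=
  if μ = ν then (if (μ : ℕ) = 0 then 1 else -1) else 0

/-- Partial derivative of a spacetime-independent Lagrangian in the μ-th component of `p`. -/
def Lp0 {D : ℕ} (L₀ : ℝ → (Fin D → ℝ) → ℝ) (μ : Fin D) (u : ℝ) (p : Fin D → ℝ) : ℝ :=
  fderiv ℝ (L₀ u) p (Pi.single μ 1)

theorem eta_sum_aux {D : ℕ} (ν : Fin D) (f : Fin D → ℝ) :
    (∑ σ, eta D ν σ * f σ) = eta D ν ν * f ν := by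
  rw [Finset.sum_eq_single ν]
  · intro b _ hb
    simp [eta, Ne.symm hb]
  · simp

theorem Lp0_aux {D : ℕ} (F : ℝ → ℝ → ℝ)
    (hF : ContDiff ℝ (⊤ : ℕ∞) (fun q : ℝ × ℝ => F q.1 q.2))
    (L₀ : ℝ → (Fin D → ℝ) → ℝ)
    (hL₀ : ∀ u p, L₀ u p = F u (∑ α, ∑ β, eta D α β * p α * p β))
    (u : ℝ) (p : Fin D → ℝ) :
    ∃ c : ℝ, ∀ μ, Lp0 L₀ μ u p = c * (eta D μ μ * p μ) := by
  have hQ : ∀ p : Fin D → ℝ, (∑ α, ∑ β, eta D α β * p α * p β)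
      = ∑ α, eta D α α * (p α) ^ 2 := by
    intro p
    refine Finset.sum_congr rfl fun α _ => ?_
    have h := eta_sum_aux α (fun β => p α * p β)
    simp only [← mul_assoc] at h
    rw [h]; ring
  have hL : L₀ u = fun p => F u (∑ α, eta D α α * (p α) ^ 2) := by
    funext p
    rw [hL₀, hQ]
  have hFu : Differentiable ℝ (F u) := by
    have h1 : Differentiable ℝ (fun q : ℝ × ℝ => F q.1 q.2) := hF.differentiable (by simp)
    have h2 : Differentiable ℝ (fun t : ℝ => ((u, t) : ℝ × ℝ)) := by fun_prop
    exact h1.comp h2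
  refine ⟨deriv (F u) (∑ α, eta D α α * (p α) ^ 2) * 2, fun μ => ?_⟩
  have hq : HasFDerivAt (fun p : Fin D → ℝ => ∑ α, eta D α α * (p α) ^ 2)
      (∑ α, eta D α α • ((2 * p α) • (ContinuousLinearMap.proj α : (Fin D → ℝ) →L[ℝ] ℝ))) p := by
    refine HasFDerivAt.fun_sum fun α _ => ?_
    refine HasFDerivAt.const_mul ?_ _
    have := (hasFDerivAt_apply (𝕜 := ℝ) α p).pow 2
    simpa using this
  have hd := (hFu (∑ α, eta D α α * (p α) ^ 2)).hasDerivAt.comp_hasFDerivAt p hq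
  rw [Function.comp_def, ← hL] at hd
  unfold Lp0
  rw [hd.fderiv]
  simp only [ContinuousLinearMap.smul_apply, ContinuousLinearMap.sum_apply,
    ContinuousLinearMap.proj_apply, smul_eq_mul, Pi.single_apply]
  simp
  ring

/-- Symmetry of the (contravariant) Energy–Momentum tensor for Lagrangians of the
form `L₀ u p = F (u, η^{αβ} p_α p_β)`. -/
theorem energy_momentum_tensor_symmetric {D : ℕ} (hD : 1 ≤ D)
    (F : ℝ → ℝ → ℝ) (hF : ContDiff ℝ (⊤ : ℕ∞) (fun q : ℝ × ℝ => F q.1 q.2))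
    (L₀ : ℝ → (Fin D → ℝ) → ℝ)
    (hL₀ : ∀ u p, L₀ u p = F u (∑ α, ∑ β, eta D α β * p α * p β))
    (φ : (Fin D → ℝ) → ℝ) (hφ : ContDiff ℝ (⊤ : ℕ∞) φ)
    (T : Fin D → Fin D → (Fin D → ℝ) → ℝ)
    (hT : ∀ μ ν x, T μ ν x =
      Lp0 L₀ μ (φ x) (grad φ x) * pd φ ν x -
        (if μ = ν then L₀ (φ x) (grad φ x) else 0)) :
    ∀ (μ ν : Fin D) (x : Fin D → ℝ),
      (∑ σ, eta D ν σ * T μ σ x) = ∑ σ, eta D μ σ * T ν σ x := by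
  intro μ ν x
  rw [eta_sum_aux ν (fun σ => T μ σ x), eta_sum_aux μ (fun σ => T ν σ x)]
  simp only [hT]
  obtain ⟨c, hc⟩ := Lp0_aux F hF L₀ hL₀ (φ x) (grad φ x)
  rw [hc, hc]
  by_cases h : μ = ν
  · subst h; rfl
  · rw [if_neg h, if_neg (Ne.symm h)]
    simp only [grad]
    ring

end
end

section
/- Theorem 3.4 (theories with δL/δ∂φ proportional to the gradient of δL/δφ): let L be a Lagrangian density and ρ ∈ ℝ a constant such that for EVERY smooth field ψ (solution or not), every x, and every μ: Σ_ν η μ ν · L_{p_ν}(jψ x) = ρ · ∂_μ (fun y ↦ L_u(jψ y)) x. Let φ be a smooth solution of the Euler–Lagrange equation for L. Then for each fixed ν, the current K^μ_ν x := L_{p_μ}(jφ x) · (Σ_α η ν α · L_{p_α}(jφ x)) − (1/2)·(if μ = ν then ρ·(L_u(jφ x))² + Σ_{α,β} η α β · L_{p_α}(jφ x) · L_{p_β}(jφ x) else 0) is conserved: Σ_μ ∂_μ (fun y ↦ K^μ_ν y) x = 0 for all x. -/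
open scoped BigOperators

noncomputable section

lemma eta_sum {D : ℕ} (ν : Fin D) (f : Fin D → ℝ) :
    ∑ α, eta D ν α * f α = eta D ν ν * f ν := by
  rw [Finset.sum_eq_single ν]
  · intro b _ hb
    simp [eta, hb.symm]
  · simp

lemma abstract_current {D : ℕ} (U : (Fin D → ℝ) → ℝ) (P : Fin D → (Fin D → ℝ) → ℝ) (ρ : ℝ)
    (hU : ContDiff ℝ (⊤ : ℕ∞) U) (hP : ∀ μ, ContDiff ℝ (⊤ : ℕ∞) (P μ))
    (hc : ∀ x μ, ∑ ν, eta D μ ν * P ν x = ρ * pd U μ x)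
    (hEL : ∀ x, U x = ∑ μ, pd (P μ) μ x) (ν : Fin D) (x : Fin D → ℝ) :
    ∑ μ, pd (fun y => P μ y * (∑ α, eta D ν α * P α y) -
      (1/2) * (if μ = ν then ρ * (U y)^2 + ∑ α, ∑ β, eta D α β * P α y * P β y else 0)) μ x = 0 := by
  have hUd : Differentiable ℝ U := hU.differentiable (by simp)
  have hPd : ∀ μ, Differentiable ℝ (P μ) := fun μ => (hP μ).differentiable (by simp)
  have hc' : ∀ x μ, eta D μ μ * P μ x = ρ * pd U μ x := fun x μ => by
    rw [← hc, eta_sum]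
  have hs2 : ∀ y, ∑ α, ∑ β, eta D α β * P α y * P β y = ∑ α, eta D α α * (P α y) ^ 2 := by
    intro y
    refine Finset.sum_congr rfl fun α _ => ?_
    have := eta_sum α (fun β => P α y * P β y)
    simp only [← mul_assoc] at this
    rw [this]; ring
  have hsym : ∀ μ, eta D ν ν * pd (P ν) μ x = eta D μ μ * pd (P μ) ν x := by
    have hd : Differentiable ℝ (fderiv ℝ U) :=
      (hU.fderiv_right (m := 1) (by norm_cast)).differentiable (by simp)
    have key : ∀ μ κ, eta D κ κ * pd (P κ) μ x
        = ρ * fderiv ℝ (fderiv ℝ U) x (Pi.single μ 1) (Pi.single κ 1) := by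
      intro μ κ
      have h1 : HasFDerivAt (fun y => eta D κ κ * P κ y) (eta D κ κ • fderiv ℝ (P κ) x) x :=
        ((hPd κ) x).hasFDerivAt.const_mul _
      have h2 : HasFDerivAt (fun y => ρ * fderiv ℝ U y (Pi.single κ 1))
          (ρ • ((fderiv ℝ (fderiv ℝ U) x).flip (Pi.single κ 1))) x := by
        have := ((hd x).hasFDerivAt.clm_apply (hasFDerivAt_const (Pi.single κ (1:ℝ)) x)).const_mul ρ
        simpa using this
      have e : (fun y => eta D κ κ * P κ y) = (fun y => ρ * fderiv ℝ U y (Pi.single κ 1)) := by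
        funext y; exact hc' y κ
      rw [e] at h1
      have := congrArg (fun T => T (Pi.single μ 1)) (h1.unique h2)
      simpa [pd] using this
    intro μ
    rw [key, key]
    congr 1
    have hs : IsSymmSndFDerivAt ℝ U x := (hU.contDiffAt).isSymmSndFDerivAt (by simp; norm_cast)
    exact hs _ _
  have hterm : ∀ μ, pd (fun y => P μ y * (∑ α, eta D ν α * P α y) -
      (1/2) * (if μ = ν then ρ * (U y)^2 + ∑ α, ∑ β, eta D α β * P α y * P β y else 0)) μ x
      = (pd (P μ) μ x * (eta D ν ν * P ν x) + P μ x * (eta D ν ν * pd (P ν) μ x))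
        - (if μ = ν then ρ * U x * pd U μ x + ∑ α, eta D α α * P α x * pd (P α) μ x else 0) := by
    intro μ
    simp only [eta_sum, hs2]
    have h1 := ((hPd μ) x).hasFDerivAt.mul (((hPd ν) x).hasFDerivAt.const_mul (eta D ν ν))
    by_cases h : μ = ν
    · simp only [h, if_true] at h1 ⊢
      have h2 := ((hUd x).hasFDerivAt.pow 2).const_mul ρ
      have h3 : HasFDerivAt (fun y => ∑ α, eta D α α * P α y ^ 2) _ x :=
        HasFDerivAt.fun_sum (u := Finset.univ) fun α _ =>
          (((hPd α) x).hasFDerivAt.pow 2).const_mul (eta D α α)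
      have h4 := h1.sub ((h2.add h3).const_mul (1/2))
      have := congrArg (fun T => T (Pi.single ν 1)) h4.fderiv
      refine Eq.trans this ?_
      simp [pd, mul_add, Finset.mul_sum]
      have : ∀ α, 2⁻¹ * (eta D α α * (2 * P α x * (fderiv ℝ (P α) x) (Pi.single ν 1)))
        = eta D α α * P α x * (fderiv ℝ (P α) x) (Pi.single ν 1) := fun α => by ring
      simp only [this]
      ring
    · simp only [h, if_false, mul_zero, sub_zero]
      have := congrArg (fun T => T (Pi.single μ 1)) h1.fderiv
      refine Eq.trans this ?_
      simp [pd]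
      ring
  simp only [hterm]
  rw [Finset.sum_sub_distrib, Finset.sum_add_distrib, ← Finset.sum_mul, ← hEL]
  simp only [hsym, hc']
  simp only [Finset.sum_ite_eq', Finset.mem_univ, if_true]
  have : ∀ α, P α x * (eta D α α * pd (P α) ν x) = eta D α α * P α x * pd (P α) ν x :=
    fun α => by ring
  simp only [this]
  simp only [hc']
  ring

lemma contDiff_grad {D : ℕ} {φ : (Fin D → ℝ) → ℝ} (hφ : ContDiff ℝ (⊤ : ℕ∞) φ) :
    ContDiff ℝ (⊤ : ℕ∞) (grad φ) := by
  refine contDiff_pi.2 fun ν => ?_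
  exact (hφ.fderiv_right (m := (⊤ : ℕ∞)) (by norm_cast)).clm_apply contDiff_const

lemma contDiff_jets {D : ℕ} (L : (Fin D → ℝ) → ℝ → (Fin D → ℝ) → ℝ)
    (hL : ContDiff ℝ (⊤ : ℕ∞) (fun q : (Fin D → ℝ) × ℝ × (Fin D → ℝ) => L q.1 q.2.1 q.2.2))
    (φ : (Fin D → ℝ) → ℝ) (hφ : ContDiff ℝ (⊤ : ℕ∞) φ) :
    ContDiff ℝ (⊤ : ℕ∞) (fun y => Lu L y (φ y) (grad φ y)) ∧
    ∀ μ, ContDiff ℝ (⊤ : ℕ∞) (fun y => Lp L μ y (φ y) (grad φ y)) := by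
  set F := (fun q : (Fin D → ℝ) × ℝ × (Fin D → ℝ) => L q.1 q.2.1 q.2.2) with hF
  have hd : Differentiable ℝ F := hL.differentiable (by simp)
  have hj : ContDiff ℝ (⊤ : ℕ∞) (fun y => (y, φ y, grad φ y)) :=
    contDiff_id.prodMk (hφ.prodMk (contDiff_grad hφ))
  have hdF : ContDiff ℝ (⊤ : ℕ∞) (fun y => fderiv ℝ F (y, φ y, grad φ y)) :=
    (hL.fderiv_right (m := (⊤ : ℕ∞)) (by norm_cast)).comp hj
  constructor
  · have : (fun y => Lu L y (φ y) (grad φ y)) =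
        fun y => fderiv ℝ F (y, φ y, grad φ y) (0, 1, 0) := by
      funext y
      have h := (hd (y, φ y, grad φ y)).hasFDerivAt.comp_hasDerivAt (φ y)
        ((hasDerivAt_const (φ y) y).prodMk
          ((hasDerivAt_id (φ y)).prodMk (hasDerivAt_const (φ y) (grad φ y))))
      exact h.deriv
    rw [this]
    exact hdF.clm_apply contDiff_const
  · intro μ
    have : (fun y => Lp L μ y (φ y) (grad φ y)) =
        fun y => fderiv ℝ F (y, φ y, grad φ y) (0, 0, Pi.single μ 1) := by
      funext y
      have hg := (hasFDerivAt_const (𝕜 := ℝ) y (grad φ y)).prodMk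
          ((hasFDerivAt_const (φ y) (grad φ y)).prodMk (hasFDerivAt_id (grad φ y)))
      have h := HasFDerivAt.comp (g := F) (grad φ y) (hd (y, φ y, grad φ y)).hasFDerivAt hg
      exact congrArg (fun T => T (Pi.single μ 1)) h.fderiv
    rw [this]
    exact hdF.clm_apply contDiff_const

/-- Theorem 3.4: theories with `δL/δ∂_μφ = ρ ∂^μ (δL/δφ)` admit the conserved
current `K^μ_ν`. -/
theorem proportional_gradient_theories_conserved_current {D : ℕ} (hD : 1 ≤ D)
    (L : (Fin D → ℝ) → ℝ → (Fin D → ℝ) → ℝ)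
    (hL : ContDiff ℝ (⊤ : ℕ∞) (fun q : (Fin D → ℝ) × ℝ × (Fin D → ℝ) => L q.1 q.2.1 q.2.2))
    (ρ : ℝ)
    (hcond : ∀ ψ : (Fin D → ℝ) → ℝ, ContDiff ℝ (⊤ : ℕ∞) ψ → ∀ (x : Fin D → ℝ) (μ : Fin D),
      ∑ ν, eta D μ ν * Lp L ν x (ψ x) (grad ψ x) =
        ρ * pd (fun y => Lu L y (ψ y) (grad ψ y)) μ x)
    (φ : (Fin D → ℝ) → ℝ) (hφ : ContDiff ℝ (⊤ : ℕ∞) φ)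
    (hEL : ∀ x, Lu L x (φ x) (grad φ x) =
      ∑ μ, pd (fun y => Lp L μ y (φ y) (grad φ y)) μ x) :
    ∀ (ν : Fin D) (x : Fin D → ℝ),
      ∑ μ, pd (fun y =>
        Lp L μ y (φ y) (grad φ y) * (∑ α, eta D ν α * Lp L α y (φ y) (grad φ y)) -
          (1/2) * (if μ = ν then
            ρ * (Lu L y (φ y) (grad φ y))^2 +
              ∑ α, ∑ β, eta D α β * Lp L α y (φ y) (grad φ y) * Lp L β y (φ y) (grad φ y)
          else 0)) μ x = 0 := by
  obtain ⟨hU, hP⟩ := contDiff_jets L hL φ hφ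
  intro ν x
  exact abstract_current (fun y => Lu L y (φ y) (grad φ y))
    (fun μ y => Lp L μ y (φ y) (grad φ y)) ρ hU hP (fun x μ => hcond φ hφ x μ) hEL ν x

end
end

section
/- Theorem 3.7, first current (homogeneous potentials of degree k = D/Δ_D): let D ≥ 1 with D ≠ 2, set Δ := (D−2)/2 and k := 2·D/(D−2). Let U : ℝ → ℝ be smooth satisfying the Euler identity u·U'(u) = k·U(u) for all u ∈ ℝ (homogeneity of degree k), and let φ : (Fin D → ℝ) → ℝ be a smooth solution of □φ x + U'(φ x) = 0 for all x. With L x := (1/2)·Σ_{μ,ν} η μ ν · ∂_μ φ x · ∂_ν φ x − U(φ x) and Energy–Momentum tensor T^μ_ν x := ∂^μ φ x · ∂_ν φ x − (if μ = ν then L x else 0), the current J^μ x := Δ · φ x · ∂^μ φ x + Σ_α (x α) · T^μ_α x is conserved: Σ_μ ∂_μ (fun y ↦ J^μ y) x = 0 for all x. -/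
open scoped BigOperators

noncomputable section

/-- Raised-index partial derivative `∂^μ F x`. -/
def pdu {D : ℕ} (F : (Fin D → ℝ) → ℝ) (μ : Fin D) (x : Fin D → ℝ) : ℝ :=
  ∑ ν, eta D μ ν * pd F ν x

/-- d'Alembertian `□F x`. -/
def box {D : ℕ} (F : (Fin D → ℝ) → ℝ) (x : Fin D → ℝ) : ℝ :=
  ∑ μ, pd (fun y => pdu F μ y) μ x

/-- The canonical Lagrangian `(1/2) ∂_μφ ∂^μφ − U(φ)`. -/
def Lag {D : ℕ} (U : ℝ → ℝ) (φ : (Fin D → ℝ) → ℝ) (x : Fin D → ℝ) : ℝ :=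
  (1/2) * ∑ μ, ∑ ν, eta D μ ν * pd φ μ x * pd φ ν x - U (φ x)

/-- Energy–Momentum tensor `T^μ_ν` for the canonical Lagrangian. -/
def EMTc {D : ℕ} (U : ℝ → ℝ) (φ : (Fin D → ℝ) → ℝ) (μ ν : Fin D) (x : Fin D → ℝ) : ℝ :=
  pdu φ μ x * pd φ ν x - (if μ = ν then Lag U φ x else 0)

theorem pd_of {D : ℕ} {F : (Fin D → ℝ) → ℝ} {F' : (Fin D → ℝ) →L[ℝ] ℝ} {x : Fin D → ℝ}
    (h : HasFDerivAt F F' x) (μ : Fin D) : pd F μ x = F' (Pi.single μ 1) := by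
  rw [pd, h.fderiv]

theorem pdu_eq {D : ℕ} (F : (Fin D → ℝ) → ℝ) (μ : Fin D) (x : Fin D → ℝ) :
    pdu F μ x = eta D μ μ * pd F μ x := by
  unfold pdu
  rw [Finset.sum_eq_single μ]
  · intro ν _ h
    simp [eta, h.symm]
  · simp

theorem Lag_eq {D : ℕ} (U : ℝ → ℝ) (φ : (Fin D → ℝ) → ℝ) (x : Fin D → ℝ) :
    Lag U φ x = (1/2) * ∑ μ, eta D μ μ * (pd φ μ x * pd φ μ x) - U (φ x) := by
  unfold Lag
  congr 2
  refine Finset.sum_congr rfl fun μ _ => ?_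
  rw [Finset.sum_eq_single μ]
  · ring
  · intro ν _ h
    simp [eta, h.symm]
  · simp

theorem J_eq {D : ℕ} (U : ℝ → ℝ) (φ : (Fin D → ℝ) → ℝ) (c : ℝ) (μ : Fin D) (y : Fin D → ℝ) :
    c * φ y * pdu φ μ y + ∑ α, y α * EMTc U φ μ α y =
      c * eta D μ μ * (φ y * pd φ μ y) + eta D μ μ * (pd φ μ y * ∑ α, y α * pd φ α y)
        - y μ * ((1/2) * ∑ ν, eta D ν ν * (pd φ ν y * pd φ ν y) - U (φ y)) := by
  rw [← Lag_eq]
  simp only [EMTc, mul_sub, Finset.sum_sub_distrib, pdu_eq, mul_ite, mul_zero,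
    Finset.sum_ite_eq, Finset.mem_univ, if_true, Finset.mul_sum]
  rw [show ∑ α, y α * (eta D μ μ * pd φ μ y * pd φ α y) =
    ∑ α, eta D μ μ * (pd φ μ y * (y α * pd φ α y)) from
      Finset.sum_congr rfl fun α _ => by ring]
  ring

theorem pd_J {D : ℕ} (U : ℝ → ℝ) (hU : ContDiff ℝ (⊤ : ℕ∞) U) (φ : (Fin D → ℝ) → ℝ)
    (hφ : ContDiff ℝ (⊤ : ℕ∞) φ) (c : ℝ) (μ : Fin D) (x : Fin D → ℝ)
    (hp : ∀ ν, DifferentiableAt ℝ (pd φ ν) x) :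
    pd (fun y => c * φ y * pdu φ μ y + ∑ α, y α * EMTc U φ μ α y) μ x =
      c * eta D μ μ * (φ x * pd (pd φ μ) μ x + pd φ μ x * pd φ μ x)
      + eta D μ μ * (pd φ μ x * (pd φ μ x + ∑ α, x α * pd (pd φ α) μ x)
          + (∑ α, x α * pd φ α x) * pd (pd φ μ) μ x)
      - (x μ * ((∑ ν, eta D ν ν * (pd φ ν x * pd (pd φ ν) μ x)) - deriv U (φ x) * pd φ μ x)
        + ((1/2) * ∑ ν, eta D ν ν * (pd φ ν x * pd φ ν x) - U (φ x))) := by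
  simp only [J_eq]
  have h0 : HasFDerivAt φ (fderiv ℝ φ x) x :=
    (hφ.differentiable (by simp) x).hasFDerivAt
  have h1 : ∀ ν, HasFDerivAt (pd φ ν) (fderiv ℝ (pd φ ν) x) x := fun ν => (hp ν).hasFDerivAt
  have hUd : HasDerivAt U (deriv U (φ x)) (φ x) :=
    (hU.differentiable (by simp) (φ x)).hasDerivAt
  have hc : ∀ α : Fin D, HasFDerivAt (fun y : Fin D → ℝ => y α)
    (ContinuousLinearMap.proj (R := ℝ) (φ := fun _ : Fin D => ℝ) α) x := fun α => hasFDerivAt_apply α x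
  have hY := HasFDerivAt.fun_sum (u := Finset.univ) fun α _ => (hc α).mul (h1 α)
  have hS := HasFDerivAt.fun_sum (u := Finset.univ)
    fun ν _ => ((h1 ν).mul (h1 ν)).const_mul (eta D ν ν)
  have hL := (hS.const_mul (1/2)).sub (hUd.comp_hasFDerivAt x h0)
  have hJ := (((h0.mul (h1 μ)).const_mul (c * eta D μ μ)).add
    (((h1 μ).mul hY).const_mul (eta D μ μ))).sub ((hc μ).mul hL)
  refine (pd_of hJ μ).trans ?_
  have e1 : ∀ ν, fderiv ℝ (pd φ ν) x (Pi.single μ 1) = pd (pd φ ν) μ x := fun ν => rfl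
  have e0 : fderiv ℝ φ x (Pi.single μ 1) = pd φ μ x := rfl
  have e2 : ∀ α : Fin D, (Pi.single μ (1:ℝ) : Fin D → ℝ) α = if α = μ then 1 else 0 := fun α => by
    simp [Pi.single_apply]
  simp [e1, e0, e2, Finset.sum_add_distrib, ← two_mul]
  ring

theorem pd_diff {D : ℕ} (φ : (Fin D → ℝ) → ℝ)
    (hφ : ContDiff ℝ (⊤ : ℕ∞) φ) (x : Fin D → ℝ) (ν : Fin D) :
    DifferentiableAt ℝ (pd φ ν) x := by
  have h : Differentiable ℝ (fderiv ℝ φ) :=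
    (hφ.fderiv_right (m := 1) (by norm_cast)).differentiable (by simp)
  exact (h x).clm_apply (differentiableAt_const _)

theorem pd_symm {D : ℕ} (φ : (Fin D → ℝ) → ℝ)
    (hφ : ContDiff ℝ (⊤ : ℕ∞) φ) (x : Fin D → ℝ) (μ ν : Fin D) :
    pd (pd φ ν) μ x = pd (pd φ μ) ν x := by
  have h : Differentiable ℝ (fderiv ℝ φ) :=
    (hφ.fderiv_right (m := 1) (by norm_cast)).differentiable (by simp)
  have key : ∀ a b : Fin D, pd (pd φ a) b x =
      fderiv ℝ (fderiv ℝ φ) x (Pi.single b 1) (Pi.single a 1) := by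
    intro a b
    have := (h x).hasFDerivAt.clm_apply (hasFDerivAt_const (Pi.single a (1:ℝ) : Fin D → ℝ) x)
    refine (pd_of this b).trans ?_
    simp
  rw [key, key]
  have hs : IsSymmSndFDerivAt ℝ φ x :=
    (hφ.contDiffAt).isSymmSndFDerivAt (by simp; exact WithTop.coe_le_coe.2 (le_top : (2 : ℕ∞) ≤ ⊤))
  exact hs _ _

theorem box_eq {D : ℕ} (φ : (Fin D → ℝ) → ℝ)
    (hφ : ContDiff ℝ (⊤ : ℕ∞) φ) (x : Fin D → ℝ) :
    box φ x = ∑ μ, eta D μ μ * pd (pd φ μ) μ x := by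
  unfold box
  refine Finset.sum_congr rfl fun μ _ => ?_
  simp only [pdu_eq]
  refine (pd_of ((pd_diff φ hφ x μ).hasFDerivAt.const_mul (eta D μ μ)) μ).trans ?_
  simp [pd]

/-- Theorem 3.7, first current: for a homogeneous potential of degree
`k = 2D/(D-2)`, the dilation current `J^μ` is conserved. -/
theorem homogeneous_potential_first_current {D : ℕ} (hD : 1 ≤ D) (hD2 : D ≠ 2)
    (U : ℝ → ℝ) (hU : ContDiff ℝ (⊤ : ℕ∞) U)
    (hhom : ∀ u : ℝ, u * deriv U u = (2 * (D : ℝ) / ((D : ℝ) - 2)) * U u)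
    (φ : (Fin D → ℝ) → ℝ) (hφ : ContDiff ℝ (⊤ : ℕ∞) φ)
    (hEL : ∀ x, box φ x + deriv U (φ x) = 0) :
    ∀ x, ∑ μ, pd (fun y =>
        ((D : ℝ) - 2) / 2 * φ y * pdu φ μ y +
          ∑ α, y α * EMTc U φ μ α y) μ x = 0 := by
  intro x
  rw [Finset.sum_congr rfl fun μ _ => pd_J U hU φ hφ _ μ x (pd_diff φ hφ x)]
  have hb := hEL x
  rw [box_eq φ hφ] at hb
  have hh := hhom (φ x)
  have hne : (D : ℝ) - 2 ≠ 0 := by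
    rw [sub_ne_zero]; exact_mod_cast hD2
  have hh' : ((D : ℝ) - 2) / 2 * (φ x * deriv U (φ x)) = D * U (φ x) := by
    rw [hh]; field_simp
  set S := ∑ ν, eta D ν ν * (pd φ ν x * pd φ ν x) with hS
  set Y := ∑ α, x α * pd φ α x with hY
  set B := ∑ μ, eta D μ μ * pd (pd φ μ) μ x with hB
  set c := ((D : ℝ) - 2) / 2 with hc
  have hsw : ∑ μ, eta D μ μ * (pd φ μ x * ∑ α, x α * pd (pd φ α) μ x) =
      ∑ μ, x μ * ∑ ν, eta D ν ν * (pd φ ν x * pd (pd φ ν) μ x) := by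
    simp only [Finset.mul_sum]
    rw [Finset.sum_comm]
    refine Finset.sum_congr rfl fun μ _ => Finset.sum_congr rfl fun ν _ => ?_
    rw [pd_symm φ hφ x ν μ]; ring
  have expand : ∀ μ : Fin D, c * eta D μ μ * (φ x * pd (pd φ μ) μ x + pd φ μ x * pd φ μ x)
      + eta D μ μ * (pd φ μ x * (pd φ μ x + ∑ α, x α * pd (pd φ α) μ x)
          + Y * pd (pd φ μ) μ x)
      - (x μ * ((∑ ν, eta D ν ν * (pd φ ν x * pd (pd φ ν) μ x)) - deriv U (φ x) * pd φ μ x)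
        + ((1/2) * S - U (φ x))) =
      (c * φ x + Y) * (eta D μ μ * pd (pd φ μ) μ x)
      + (c + 1) * (eta D μ μ * (pd φ μ x * pd φ μ x))
      + eta D μ μ * (pd φ μ x * ∑ α, x α * pd (pd φ α) μ x)
      - x μ * (∑ ν, eta D ν ν * (pd φ ν x * pd (pd φ ν) μ x))
      + deriv U (φ x) * (x μ * pd φ μ x)
      - ((1/2) * S - U (φ x)) := fun μ => by ring
  rw [Finset.sum_congr rfl fun μ _ => expand μ]
  simp only [Finset.sum_add_distrib, Finset.sum_sub_distrib, ← Finset.mul_sum, hsw, ← hS, ← hY,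
    ← hB, Finset.sum_const, Finset.card_univ, Fintype.card_fin, nsmul_eq_mul]
  have hB' : B = - deriv U (φ x) := by linarith
  have hc2 : c + 1 = D / 2 := by rw [hc]; ring
  rw [hB', hc2]
  linear_combination -hh'

end
end

section
/- Energy–Momentum tensor of the nonlinear complex scalar theory (eq. (4.14)): let U : ℝ → ℝ be smooth and let φ : (Fin D → ℝ) → ℂ be a smooth complex field solving □φ x + U'(‖φ x‖²)·φ x = 0 for all x (the complex d'Alembertian acting componentwise; ‖φ x‖² = (φ x)·conj(φ x)). Then for each fixed ν, the (real-valued) tensor T^μ_ν x := ∂^μ(fun y ↦ conj (φ y)) x · ∂_ν φ x + ∂^μ φ x · ∂_ν(fun y ↦ conj (φ y)) x − (if μ = ν then Σ_α ∂_α φ x · ∂^α(fun y ↦ conj (φ y)) x − U(‖φ x‖²) else 0) is conserved: Σ_μ ∂_μ (fun y ↦ T^μ_ν y) x = 0 for all x. -/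
open scoped BigOperators ComplexConjugate

noncomputable section

/-- Spacetime partial derivative `∂_μ F x` of a complex-valued field. -/
def pdC {D : ℕ} (F : (Fin D → ℝ) → ℂ) (μ : Fin D) (x : Fin D → ℝ) : ℂ :=
  fderiv ℝ F x (Pi.single μ 1)

/-- Raised-index partial derivative `∂^μ F x` of a complex-valued field. -/
def pduC {D : ℕ} (F : (Fin D → ℝ) → ℂ) (μ : Fin D) (x : Fin D → ℝ) : ℂ :=
  ∑ ν, (eta D μ ν : ℂ) * pdC F ν x

/-- d'Alembertian `□F x` of a complex-valued field. -/
def boxC {D : ℕ} (F : (Fin D → ℝ) → ℂ) (x : Fin D → ℝ) : ℂ :=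
  ∑ μ, pdC (fun y => pduC F μ y) μ x

lemma pduC_eq {D : ℕ} (F : (Fin D → ℝ) → ℂ) (μ : Fin D) (x : Fin D → ℝ) :
    pduC F μ x = (eta D μ μ : ℂ) * pdC F μ x := by
  unfold pduC
  rw [Finset.sum_eq_single μ]
  · intro b _ hb
    simp [eta, Ne.symm hb]
  · simp

lemma pdC_smooth {D : ℕ} {F : (Fin D → ℝ) → ℂ} (hF : ContDiff ℝ (⊤ : ℕ∞) F) (μ : Fin D) :
    ContDiff ℝ (⊤ : ℕ∞) (fun x => pdC F μ x) := by
  unfold pdC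
  exact (hF.fderiv_right (m := (⊤ : ℕ∞)) (by simp)).clm_apply contDiff_const

lemma smooth_diff {D : ℕ} {F : (Fin D → ℝ) → ℂ} (hF : ContDiff ℝ (⊤ : ℕ∞) F) :
    Differentiable ℝ F := hF.differentiable (by simp)

lemma pdC_add {D : ℕ} {F G : (Fin D → ℝ) → ℂ} (hF : Differentiable ℝ F)
    (hG : Differentiable ℝ G) (μ : Fin D) (x : Fin D → ℝ) :
    pdC (fun y => F y + G y) μ x = pdC F μ x + pdC G μ x := by
  unfold pdC
  rw [fderiv_fun_add (hF x) (hG x)]; rfl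

lemma pdC_sub {D : ℕ} {F G : (Fin D → ℝ) → ℂ} (hF : Differentiable ℝ F)
    (hG : Differentiable ℝ G) (μ : Fin D) (x : Fin D → ℝ) :
    pdC (fun y => F y - G y) μ x = pdC F μ x - pdC G μ x := by
  unfold pdC
  rw [fderiv_fun_sub (hF x) (hG x)]; rfl

lemma pdC_mul {D : ℕ} {F G : (Fin D → ℝ) → ℂ} (hF : Differentiable ℝ F)
    (hG : Differentiable ℝ G) (μ : Fin D) (x : Fin D → ℝ) :
    pdC (fun y => F y * G y) μ x = F x * pdC G μ x + pdC F μ x * G x := by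
  unfold pdC
  rw [fderiv_fun_mul (hF x) (hG x)]
  simp [mul_comm]

lemma pdC_cmul {D : ℕ} {F : (Fin D → ℝ) → ℂ} (hF : Differentiable ℝ F) (c : ℂ)
    (μ : Fin D) (x : Fin D → ℝ) :
    pdC (fun y => c * F y) μ x = c * pdC F μ x := by
  unfold pdC
  rw [fderiv_const_mul (hF x)]; rfl

lemma pdC_sum {D : ℕ} {F : Fin D → (Fin D → ℝ) → ℂ} (hF : ∀ i, Differentiable ℝ (F i))
    (μ : Fin D) (x : Fin D → ℝ) :
    pdC (fun y => ∑ i, F i y) μ x = ∑ i, pdC (F i) μ x := by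
  unfold pdC
  rw [fderiv_fun_sum (fun i _ => hF i x)]
  simp

lemma pdC_conj {D : ℕ} {F : (Fin D → ℝ) → ℂ} (hF : Differentiable ℝ F)
    (μ : Fin D) (x : Fin D → ℝ) :
    pdC (fun y => conj (F y)) μ x = conj (pdC F μ x) := by
  unfold pdC
  have h := (Complex.conjCLE.toContinuousLinearMap.hasFDerivAt.comp x (hF x).hasFDerivAt).fderiv
  have h2 : (fun y => conj (F y)) = (Complex.conjCLE.toContinuousLinearMap : ℂ → ℂ) ∘ F := by
    ext y; simp
  rw [h2, h]; simp

lemma pdC_symm {D : ℕ} {F : (Fin D → ℝ) → ℂ} (hF : ContDiff ℝ (⊤ : ℕ∞) F)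
    (μ ν : Fin D) (x : Fin D → ℝ) :
    pdC (fun y => pdC F μ y) ν x = pdC (fun y => pdC F ν y) μ x := by
  have hd : Differentiable ℝ (fderiv ℝ F) :=
    (hF.fderiv_right (m := (⊤ : ℕ∞)) (by simp)).differentiable (by simp)
  have hs : IsSymmSndFDerivAt ℝ F x := by
    apply (hF.contDiffAt).isSymmSndFDerivAt
    simp
    exact WithTop.coe_le_coe.2 (le_top : (2 : ℕ∞) ≤ ⊤)
  unfold pdC
  rw [fderiv_clm_apply (hd x) (by fun_prop), fderiv_clm_apply (hd x) (by fun_prop)]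
  simpa using hs.eq _ _

lemma conj_smooth {D : ℕ} {F : (Fin D → ℝ) → ℂ} (hF : ContDiff ℝ (⊤ : ℕ∞) F) :
    ContDiff ℝ (⊤ : ℕ∞) (fun y => conj (F y)) :=
  Complex.conjCLE.toContinuousLinearMap.contDiff.comp hF

lemma boxC_eq {D : ℕ} {F : (Fin D → ℝ) → ℂ} (hF : ContDiff ℝ (⊤ : ℕ∞) F) (x : Fin D → ℝ) :
    boxC F x = ∑ μ, (eta D μ μ : ℂ) * pdC (fun y => pdC F μ y) μ x := by
  unfold boxC
  simp only [pduC_eq]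
  exact Finset.sum_congr rfl fun μ _ => pdC_cmul (smooth_diff (pdC_smooth hF μ)) _ _ _

lemma normSq_smooth {D : ℕ} {F : (Fin D → ℝ) → ℂ} (hF : ContDiff ℝ (⊤ : ℕ∞) F) :
    ContDiff ℝ (⊤ : ℕ∞) (fun y => Complex.normSq (F y)) := by
  have h : (fun y => Complex.normSq (F y)) = fun y => ‖F y‖ ^ 2 := by
    ext y; exact Complex.normSq_eq_norm_sq _
  rw [h]; exact hF.norm_sq ℝ

lemma pdC_pot {D : ℕ} {U : ℝ → ℝ} (hU : ContDiff ℝ (⊤ : ℕ∞) U)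
    {F : (Fin D → ℝ) → ℂ} (hF : ContDiff ℝ (⊤ : ℕ∞) F) (μ : Fin D) (x : Fin D → ℝ) :
    pdC (fun y => ((U (Complex.normSq (F y)) : ℝ) : ℂ)) μ x
      = ((deriv U (Complex.normSq (F x)) : ℝ) : ℂ) *
        (F x * pdC (fun y => conj (F y)) μ x + pdC F μ x * conj (F x)) := by
  rw [← pdC_mul (smooth_diff hF) (smooth_diff (conj_smooth hF))]
  have hn : DifferentiableAt ℝ (fun y => Complex.normSq (F y)) x :=
    (normSq_smooth hF).differentiable (by simp) x
  have h1 : (fun y => F y * conj (F y)) = fun y => ((Complex.normSq (F y) : ℝ) : ℂ) := by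
    ext y; exact Complex.mul_conj _
  have hu := ((hU.differentiable (by simp)) (Complex.normSq (F x))).hasDerivAt
  have h2 := Complex.ofRealCLM.hasFDerivAt.comp x (hu.comp_hasFDerivAt x hn.hasFDerivAt)
  have h3 := Complex.ofRealCLM.hasFDerivAt.comp x hn.hasFDerivAt
  rw [h1]
  unfold pdC
  have e2 : fderiv ℝ (fun y => ((U (Complex.normSq (F y)) : ℝ) : ℂ)) x = _ := h2.fderiv
  have e3 : fderiv ℝ (fun y => ((Complex.normSq (F y) : ℝ) : ℂ)) x = _ := h3.fderiv
  rw [e2, e3]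
  simp

/-- Energy–Momentum tensor of the nonlinear complex scalar theory (eq. (4.14)). -/
theorem complex_scalar_energy_momentum_conserved {D : ℕ} (hD : 1 ≤ D)
    (U : ℝ → ℝ) (hU : ContDiff ℝ (⊤ : ℕ∞) U)
    (φ : (Fin D → ℝ) → ℂ) (hφ : ContDiff ℝ (⊤ : ℕ∞) φ)
    (hEL : ∀ x, boxC φ x + ((deriv U (Complex.normSq (φ x)) : ℝ) : ℂ) * φ x = 0) :
    ∀ (ν : Fin D) (x : Fin D → ℝ),
      ∑ μ, pdC (fun y =>
        pduC (fun z => conj (φ z)) μ y * pdC φ ν y +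
          pduC φ μ y * pdC (fun z => conj (φ z)) ν y -
          (if μ = ν then
            (∑ α, pdC φ α y * pduC (fun z => conj (φ z)) α y) -
              ((U (Complex.normSq (φ y)) : ℝ) : ℂ)
          else 0)) μ x = 0 := by
  intro ν x
  have hψ := conj_smooth hφ
  have hboxψ : boxC (fun z => conj (φ z)) x
      + ((deriv U (Complex.normSq (φ x)) : ℝ) : ℂ) * conj (φ x) = 0 := by
    have h := congrArg conj (hEL x)
    rw [boxC_eq hφ] at h
    rw [boxC_eq hψ]
    simp only [map_add, map_sum, map_mul, Complex.conj_ofReal, map_zero] at h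
    rw [← h]
    congr 1
    refine Finset.sum_congr rfl fun μ _ => ?_
    rw [← pdC_conj (smooth_diff (pdC_smooth hφ μ))]
    congr 2
    ext y
    exact pdC_conj (smooth_diff hφ) _ _
  have hboxφ := hEL x
  rw [boxC_eq hψ] at hboxψ
  rw [boxC_eq hφ] at hboxφ
  have hpot := pdC_pot hU hφ ν x
  have hV : Differentiable ℝ (fun y => ((U (Complex.normSq (φ y)) : ℝ) : ℂ)) :=
    (Complex.ofRealCLM.contDiff.comp (hU.comp (normSq_smooth hφ))).differentiable
      (by simp : ((⊤ : ℕ∞) : WithTop ℕ∞) ≠ 0)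
  simp only [pduC_eq]
  generalize (fun z => conj (φ z)) = ψ at *
  have dφ := fun μ => smooth_diff (pdC_smooth hφ μ)
  have dψ := fun μ => smooth_diff (pdC_smooth hψ μ)
  have dL : Differentiable ℝ (fun y => (∑ α, pdC φ α y * ((eta D α α : ℂ) * pdC ψ α y)) -
      ((U (Complex.normSq (φ y)) : ℝ) : ℂ)) := by fun_prop
  have hL : pdC (fun y => (∑ α, pdC φ α y * ((eta D α α : ℂ) * pdC ψ α y)) -
      ((U (Complex.normSq (φ y)) : ℝ) : ℂ)) ν x =
      (∑ α, (eta D α α : ℂ) * (pdC φ α x * pdC (fun y => pdC ψ ν y) α x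
        + pdC (fun y => pdC φ ν y) α x * pdC ψ α x))
      - pdC (fun y => ((U (Complex.normSq (φ y)) : ℝ) : ℂ)) ν x := by
    rw [pdC_sub (by fun_prop) hV, pdC_sum (fun i => by fun_prop)]
    congr 1
    refine Finset.sum_congr rfl fun α _ => ?_
    rw [pdC_mul (dφ α) (by fun_prop), pdC_cmul (dψ α), pdC_symm hφ α ν, pdC_symm hψ α ν]
    ring
  have key : ∀ μ, pdC (fun y =>
        (eta D μ μ : ℂ) * pdC ψ μ y * pdC φ ν y +
          (eta D μ μ : ℂ) * pdC φ μ y * pdC ψ ν y -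
          (if μ = ν then
            (∑ α, pdC φ α y * ((eta D α α : ℂ) * pdC ψ α y)) -
              ((U (Complex.normSq (φ y)) : ℝ) : ℂ)
          else 0)) μ x =
      (eta D μ μ : ℂ) * (pdC φ μ x * pdC (fun y => pdC ψ ν y) μ x
        + pdC (fun y => pdC φ ν y) μ x * pdC ψ μ x)
      + ((eta D μ μ : ℂ) * pdC (fun y => pdC ψ μ y) μ x) * pdC φ ν x
      + ((eta D μ μ : ℂ) * pdC (fun y => pdC φ μ y) μ x) * pdC ψ ν x
      - (if μ = ν then pdC (fun y => (∑ α, pdC φ α y * ((eta D α α : ℂ) * pdC ψ α y)) -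
              ((U (Complex.normSq (φ y)) : ℝ) : ℂ)) ν x else 0) := by
    intro μ
    have hA : pdC (fun y => (eta D μ μ : ℂ) * pdC ψ μ y * pdC φ ν y +
          (eta D μ μ : ℂ) * pdC φ μ y * pdC ψ ν y) μ x =
      (eta D μ μ : ℂ) * (pdC φ μ x * pdC (fun y => pdC ψ ν y) μ x
        + pdC (fun y => pdC φ ν y) μ x * pdC ψ μ x)
      + ((eta D μ μ : ℂ) * pdC (fun y => pdC ψ μ y) μ x) * pdC φ ν x
      + ((eta D μ μ : ℂ) * pdC (fun y => pdC φ μ y) μ x) * pdC ψ ν x := by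
      rw [pdC_add (by fun_prop) (by fun_prop), pdC_mul (by fun_prop) (dφ ν),
        pdC_mul (by fun_prop) (dψ ν), pdC_cmul (dψ μ), pdC_cmul (dφ μ)]
      ring
    rw [← hA]
    split_ifs with h
    · rw [pdC_sub (by fun_prop) dL, h]
    · simp only [sub_zero]
  simp only [key]
  rw [Finset.sum_sub_distrib, Finset.sum_add_distrib, Finset.sum_add_distrib,
    ← Finset.sum_mul, ← Finset.sum_mul, Finset.sum_ite_eq' Finset.univ ν,
    if_pos (Finset.mem_univ ν), hL, hpot]
  linear_combination pdC φ ν x * hboxψ + pdC ψ ν x * hboxφ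

end
end
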